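/- Fano-type bound for ρ-zCDP: if M : X^n → Y is ρ-zero-concentrated differentially private, then for any test function Ψ : Y → {1,…,N}, any probability distributions P_1,…,P_N on X^n, and any probability distribution Q with P_i ≪ Q for all i, max_{i} P_{X∼P_i,M}(Ψ(M(X)) ≠ i) ≥ max{ 1 − (1 + (1/N) Σ_i KL(P_i‖Q))/ln(N), 1 − (1 + (n²ρ/N²) Σ_{i,j} 2TV(P_i,P_j)/(1+TV(P_i,P_j)))/ln(N) }. Furthermore, when each P_i = p_i^{⊗n} is a product distribution, max_{i} P_{X∼P_i,M}(Ψ(M(X)) ≠ i) ≥ 1 − (1 + (n²ρ/N²) Σ_{i,j} [ (1/n)·2TV(p_i,p_j)/(1+TV(p_i,p_j)) + (2TV(p_i,p_j)/(1+TV(p_i,p_j)))² ])/ln(N). -/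

import Mathlib

open MeasureTheory ProbabilityTheory Real
open scoped ENNReal NNReal

variable {𝓧 𝓨 : Type*} [MeasurableSpace 𝓧] [MeasurableSpace 𝓨]

/-- A randomized mechanism `M : 𝓧^n → 𝓨` (a Markov kernel) is `(ε, δ)`-differentially
private if for any two datasets at Hamming distance at most `1` and any measurable event `S`,
`P(M(x) ∈ S) ≤ e^ε P(M(y) ∈ S) + δ`. -/
def IsDP [DecidableEq 𝓧] {n : ℕ} (M : Kernel (Fin n → 𝓧) 𝓨) (ε δ : ℝ) : Prop :=
  ∀ x y : Fin n → 𝓧, hammingDist x y ≤ 1 →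
    ∀ S : Set 𝓨, MeasurableSet S →
      M x S ≤ ENNReal.ofReal (Real.exp ε) * M y S + ENNReal.ofReal δ

open scoped Classical in
/-- The Renyi divergence of order `a`:
`D_a(P ‖ Q) = (a - 1)⁻¹ log ∫ (dP/dQ)^a dQ`, with value `∞` when `P` is not absolutely
continuous w.r.t. `Q` or the integral is infinite. -/
noncomputable def renyiDiv {α : Type*} [MeasurableSpace α] (a : ℝ) (P Q : Measure α) : ℝ≥0∞ :=
  if P ≪ Q ∧ ∫⁻ x, (P.rnDeriv Q x) ^ a ∂Q ≠ ⊤ then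
    ENNReal.ofReal ((a - 1)⁻¹ * Real.log (∫⁻ x, (P.rnDeriv Q x) ^ a ∂Q).toReal)
  else ⊤

/-- A randomized mechanism `M : 𝓧^n → 𝓨` is `ρ`-zero-concentrated differentially private if
for any two datasets at Hamming distance at most `1` and any order `a ∈ (1, ∞)`,
`D_a(M(x) ‖ M(y)) ≤ ρ a`. -/
def IsZCDP [DecidableEq 𝓧] {n : ℕ} (M : Kernel (Fin n → 𝓧) 𝓨) (ρ : ℝ) : Prop :=
  ∀ x y : Fin n → 𝓧, hammingDist x y ≤ 1 → ∀ a : ℝ, 1 < a →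
    renyiDiv a (M x) (M y) ≤ ENNReal.ofReal (ρ * a)

open scoped Classical in
/-- The Kullback-Leibler divergence `KL(P ‖ Q) = ∫ log (dP/dQ) dP`, with value `∞` when
`P` is not absolutely continuous w.r.t. `Q` or the log-likelihood ratio is not integrable. -/
noncomputable def klDiv' {α : Type*} [MeasurableSpace α] (P Q : Measure α) : ℝ≥0∞ :=
  if P ≪ Q ∧ Integrable (llr P Q) P then ENNReal.ofReal (∫ x, llr P Q x ∂P) else ⊤

/-- The total variation distance between two measures:
`TV(P, Q) = sup { P(S) - Q(S) | S measurable }`. -/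
noncomputable def tvDist {α : Type*} [MeasurableSpace α] (P Q : Measure α) : ℝ :=
  ⨆ S : {S : Set α // MeasurableSet S}, ((P S.1).toReal - (Q S.1).toReal)


/-- Binary Kullback-Leibler divergence. -/
noncomputable def bkl (p q : ℝ) : ℝ := p * Real.log (p / q) + (1 - p) * Real.log ((1 - p) / (1 - q))

/-- Donsker-Varadhan on two points. -/
lemma bkl_dv {p q : ℝ} (hp : 0 < p) (hp1 : p < 1) (hq : 0 < q) (hq1 : q < 1) (A B : ℝ) :
    p * A + (1 - p) * B ≤ bkl p q + Real.log (q * Real.exp A + (1 - q) * Real.exp B) := by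
  have hp' : 0 < 1 - p := by linarith
  have hq' : 0 < 1 - q := by linarith
  set Z := q * Real.exp A + (1 - q) * Real.exp B with hZ
  have hZp : 0 < Z := by positivity
  have key : ∀ (u v C : ℝ), 0 < u → 0 < v →
      u * (C - Real.log Z - Real.log (u / v)) ≤ v * Real.exp C / Z - u := by
    intro u v C hu hv
    have h := Real.log_le_sub_one_of_pos (show 0 < v * Real.exp C / (u * Z) by positivity)
    rw [Real.log_div (by positivity) (by positivity), Real.log_mul hv.ne' (by positivity),
      Real.log_exp, Real.log_mul hu.ne' hZp.ne'] at h
    rw [Real.log_div hu.ne' hv.ne']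
    have h2 := mul_le_mul_of_nonneg_left h hu.le
    have h3 : u * (v * Real.exp C / (u * Z) - 1) = v * Real.exp C / Z - u := by
      field_simp
    rw [h3] at h2
    linarith
  have h1 := key p q A hp hq
  have h2 := key (1 - p) (1 - q) B hp' hq'
  have h3 : q * Real.exp A / Z + (1 - q) * Real.exp B / Z = 1 := by
    rw [← add_div, ← hZ, div_self hZp.ne']
  unfold bkl
  nlinarith

lemma bkl_step {p q r s ρ : ℝ} (hp : 0 < p) (hp1 : p < 1) (hq : 0 < q) (hq1 : q < 1)
    (hr : 0 < r) (hr1 : r < 1) (hs : 0 < s)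
    (h : q * (q / r) ^ s + (1 - q) * ((1 - q) / (1 - r)) ^ s ≤ Real.exp (s * (ρ * (1 + s)))) :
    s * bkl p r ≤ (1 + s) * bkl p q + s * (ρ * (1 + s)) := by
  have hp' : 0 < 1 - p := by linarith
  have hq' : 0 < 1 - q := by linarith
  have hr' : 0 < 1 - r := by linarith
  have h1 := bkl_dv hp hp1 hq hq1 (s * Real.log (q / r)) (s * Real.log ((1 - q) / (1 - r)))
  have e1 : Real.exp (s * Real.log (q / r)) = (q / r) ^ s := by
    rw [Real.rpow_def_of_pos (by positivity), mul_comm]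
  have e2 : Real.exp (s * Real.log ((1 - q) / (1 - r))) = ((1 - q) / (1 - r)) ^ s := by
    rw [Real.rpow_def_of_pos (by positivity), mul_comm]
  rw [e1, e2] at h1
  have h2 := (Real.log_le_iff_le_exp (by positivity)).2 h
  have h3 : s * bkl p r = s * bkl p q + (p * (s * Real.log (q / r)) +
      (1 - p) * (s * Real.log ((1 - q) / (1 - r)))) := by
    unfold bkl
    rw [Real.log_div hp.ne' hr.ne', Real.log_div hp.ne' hq.ne', Real.log_div hq.ne' hr.ne',
      Real.log_div hp'.ne' hr'.ne', Real.log_div hp'.ne' hq'.ne', Real.log_div hq'.ne' hr'.ne']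
    ring
  linarith

lemma bkl_self (p : ℝ) : bkl p p = 0 := by
  unfold bkl
  by_cases h : p = 0 <;> by_cases h' : 1 - p = 0 <;> simp [h, h']

/-- one step of group privacy -/
lemma bkl_group {p q r ρ : ℝ} (d : ℕ) (hρ : 0 < ρ)
    (hp : 0 < p) (hp1 : p < 1) (hq : 0 < q) (hq1 : q < 1)
    (hr : 0 < r) (hr1 : r < 1)
    (h : ∀ s, 0 < s →
      q * (q / r) ^ s + (1 - q) * ((1 - q) / (1 - r)) ^ s ≤ Real.exp (s * (ρ * (1 + s))))
    (hd : bkl p q ≤ ρ * (d : ℝ) ^ 2) (hd0 : d = 0 → p = q) :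
    bkl p r ≤ ρ * ((d + 1 : ℕ) : ℝ) ^ 2 := by
  rcases Nat.eq_zero_or_pos d with rfl | hpos
  · have := hd0 rfl
    subst this
    have h1 : ∀ s, 0 < s → bkl p r ≤ ρ * (1 + s) := by
      intro s hs
      have := bkl_step hp hp1 hq hq1 hr hr1 hs (h s hs)
      rw [bkl_self] at this
      nlinarith
    simp only [Nat.zero_add, Nat.cast_one, one_pow, mul_one]
    refine le_of_forall_pos_le_add fun ε hε => ?_
    have := h1 (ε / ρ) (by positivity)
    have e : ρ * (1 + ε / ρ) = ρ + ε := by field_simp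
    linarith
  · have hd' : (0 : ℝ) < d := by exact_mod_cast hpos
    have h1 := bkl_step hp hp1 hq hq1 hr hr1 hd' (h d hd')
    push_cast
    have h2 : (1 + (d : ℝ)) * bkl p q ≤ (1 + d) * (ρ * (d : ℝ) ^ 2) := by gcongr
    have h3 : (d : ℝ) * bkl p r ≤ d * (ρ * ((d : ℝ) + 1) ^ 2) := by nlinarith
    exact le_of_mul_le_mul_left h3 hd'

lemma holder_cell {α : Type*} [MeasurableSpace α] {P Q : Measure α} [IsProbabilityMeasure P]
    [IsProbabilityMeasure Q] (hPQ : P ≪ Q) {S : Set α} (hS : MeasurableSet S) {s : ℝ}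
    (hs : 0 < s) :
    (P S) ^ (1 + s) ≤ (∫⁻ x in S, (P.rnDeriv Q x) ^ (1 + s) ∂Q) * (Q S) ^ s := by
  have hc : (1 + s).HolderConjugate ((1 + s) / s) := by
    rw [Real.holderConjugate_iff]
    refine ⟨by linarith, ?_⟩
    field_simp
  have h := ENNReal.lintegral_mul_le_Lp_mul_Lq (Q.restrict S) hc
    (f := P.rnDeriv Q) (g := fun _ => 1) (Measure.measurable_rnDeriv P Q).aemeasurable
    aemeasurable_const
  simp only [Pi.mul_apply, mul_one, ENNReal.one_rpow, lintegral_const, one_mul,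
    Measure.restrict_apply_univ] at h
  rw [Measure.setLIntegral_rnDeriv hPQ] at h
  have h2 := ENNReal.rpow_le_rpow h (show 0 ≤ 1 + s by linarith)
  rw [ENNReal.mul_rpow_of_nonneg _ _ (by linarith), ← ENNReal.rpow_mul, ← ENNReal.rpow_mul] at h2
  have e1 : 1 / (1 + s) * (1 + s) = 1 := by field_simp
  have e2 : 1 / ((1 + s) / s) * (1 + s) = s := by field_simp
  rwa [e1, e2, ENNReal.rpow_one] at h2

lemma holder_cell_real {α : Type*} [MeasurableSpace α] {P Q : Measure α} [IsProbabilityMeasure P]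
    [IsProbabilityMeasure Q] (hPQ : P ≪ Q) {S : Set α} (hS : MeasurableSet S) {s : ℝ}
    (hs : 0 < s) (hfin : ∫⁻ x, (P.rnDeriv Q x) ^ (1 + s) ∂Q ≠ ⊤) (hp : 0 < P.real S)
    (hq : 0 < Q.real S) :
    P.real S * (P.real S / Q.real S) ^ s
      ≤ (∫⁻ x in S, (P.rnDeriv Q x) ^ (1 + s) ∂Q).toReal := by
  have hfin' : ∫⁻ x in S, (P.rnDeriv Q x) ^ (1 + s) ∂Q ≠ ⊤ :=
    ne_top_of_le_ne_top hfin (setLIntegral_le_lintegral _ _)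
  have h := ENNReal.toReal_mono (ENNReal.mul_ne_top hfin'
    (ENNReal.rpow_ne_top_of_nonneg hs.le (measure_ne_top Q S))) (holder_cell hPQ hS hs)
  rw [ENNReal.toReal_mul, ← ENNReal.toReal_rpow, ← ENNReal.toReal_rpow] at h
  change P.real S ^ (1 + s) ≤ _ * Q.real S ^ s at h
  rw [Real.div_rpow hp.le hq.le, ← mul_div_assoc, div_le_iff₀ (by positivity)]
  rwa [Real.rpow_add hp, Real.rpow_one] at h

lemma renyi_le {α : Type*} [MeasurableSpace α] {P Q : Measure α} [IsProbabilityMeasure P]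
    [IsProbabilityMeasure Q] {s ρ : ℝ} (hs : 0 < s) (hρ : 0 < ρ)
    (h : renyiDiv (1 + s) P Q ≤ ENNReal.ofReal (ρ * (1 + s))) :
    P ≪ Q ∧ ∫⁻ x, (P.rnDeriv Q x) ^ (1 + s) ∂Q ≠ ⊤ ∧
      (∫⁻ x, (P.rnDeriv Q x) ^ (1 + s) ∂Q).toReal ≤ Real.exp (s * (ρ * (1 + s))) := by
  unfold renyiDiv at h
  split_ifs at h with hc
  · refine ⟨hc.1, hc.2, ?_⟩
    rw [ENNReal.ofReal_le_ofReal_iff (by positivity), add_sub_cancel_left,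
      inv_mul_le_iff₀ hs] at h
    rcases (ENNReal.toReal_nonneg :
      0 ≤ (∫⁻ x, (P.rnDeriv Q x) ^ (1 + s) ∂Q).toReal).eq_or_lt with h0 | h0
    · rw [← h0]; positivity
    · exact (Real.log_le_iff_le_exp h0).1 h
  · exact absurd h (by simp)

lemma renyi_binary {α : Type*} [MeasurableSpace α] {P Q : Measure α} [IsProbabilityMeasure P]
    [IsProbabilityMeasure Q] {s ρ : ℝ} (hs : 0 < s) (hρ : 0 < ρ)
    (h : renyiDiv (1 + s) P Q ≤ ENNReal.ofReal (ρ * (1 + s))) {S : Set α} (hS : MeasurableSet S)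
    (hp : 0 < P.real S) (hp1 : P.real S < 1) (hq : 0 < Q.real S) (hq1 : Q.real S < 1) :
    P.real S * (P.real S / Q.real S) ^ s + (1 - P.real S) * ((1 - P.real S) / (1 - Q.real S)) ^ s
      ≤ Real.exp (s * (ρ * (1 + s))) := by
  obtain ⟨hac, hfin, hle⟩ := renyi_le hs hρ h
  refine le_trans ?_ hle
  rw [← lintegral_add_compl _ hS] at hfin ⊢
  have hf := ENNReal.add_ne_top.1 hfin
  rw [ENNReal.toReal_add hf.1 hf.2]
  rw [lintegral_add_compl _ hS] at hfin
  rw [← probReal_compl_eq_one_sub hS, ← probReal_compl_eq_one_sub hS]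
  refine add_le_add (holder_cell_real hac hS hs hfin hp hq)
    (holder_cell_real hac hS.compl hs hfin ?_ ?_)
  · rw [probReal_compl_eq_one_sub hS]; linarith
  · rw [probReal_compl_eq_one_sub hS]; linarith

/-- Variational (Donsker-Varadhan type) bound. -/
lemma dv_measure {α : Type*} [MeasurableSpace α] {P Q : Measure α} [IsProbabilityMeasure P]
    [IsProbabilityMeasure Q] (hPQ : P ≪ Q) (hint : Integrable (llr P Q) P) {g : α → ℝ}
    (hg : Integrable g P) (hg' : Integrable (fun x => Real.exp (g x)) Q) :
    ∫ x, g x ∂P ≤ ∫ x, llr P Q x ∂P - 1 + ∫ x, Real.exp (g x) ∂Q := by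
  have h1 : Integrable (fun x => g x - llr P Q x) P := hg.sub hint
  have h2 := (integrable_rnDeriv_smul_iff hPQ (f := fun x => g x - llr P Q x)).2 h1
  have h3 := integral_rnDeriv_smul hPQ (f := fun x => g x - llr P Q x)
  rw [integral_sub hg hint] at h3
  have h4 : ∫ x, (P.rnDeriv Q x).toReal • (g x - llr P Q x) ∂Q ≤
      ∫ x, (Real.exp (g x) - (P.rnDeriv Q x).toReal) ∂Q := by
    refine integral_mono h2 (hg'.sub Measure.integrable_toReal_rnDeriv) fun x => ?_
    simp only [llr, smul_eq_mul]
    rcases (ENNReal.toReal_nonneg : 0 ≤ (P.rnDeriv Q x).toReal).eq_or_lt with h0 | h0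
    · rw [← h0]; simp; positivity
    · set f := (P.rnDeriv Q x).toReal
      have := Real.log_le_sub_one_of_pos (show 0 < Real.exp (g x) / f by positivity)
      rw [Real.log_div (by positivity) h0.ne', Real.log_exp] at this
      have h5 := mul_le_mul_of_nonneg_left this h0.le
      have h6 : f * (Real.exp (g x) / f - 1) = Real.exp (g x) - f := by field_simp
      linarith
  rw [integral_sub hg' Measure.integrable_toReal_rnDeriv, Measure.integral_toReal_rnDeriv hPQ] at h4
  simp at h4
  simp only [smul_eq_mul] at h3
  linarith

lemma hamming_path {α : Type*} [DecidableEq α] {n d : ℕ} {x y : Fin n → α}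
    (h : hammingDist x y = d + 1) : ∃ z, hammingDist x z = d ∧ hammingDist z y ≤ 1 := by
  have hne : x ≠ y := by
    intro he
    rw [he, hammingDist_self] at h
    omega
  obtain ⟨i, hi⟩ := Function.ne_iff.1 hne
  refine ⟨Function.update y i (x i), ?_, ?_⟩
  · have : (Finset.univ.filter fun j => x j ≠ Function.update y i (x i) j)
        = (Finset.univ.filter fun j => x j ≠ y j).erase i := by
      ext j
      by_cases hj : j = i
      · subst hj; simp
      · simp [hj]
    unfold hammingDist at h ⊢
    rw [this, Finset.card_erase_of_mem (by simpa using hi), h]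
    rfl
  · unfold hammingDist
    refine le_trans (Finset.card_le_card (t := {i}) ?_) (by simp)
    intro j hj
    by_contra hji
    simp only [Finset.mem_singleton] at hji
    simp [hji] at hj

lemma zcdp_ac [DecidableEq 𝓧] {n : ℕ} (M : Kernel (Fin n → 𝓧) 𝓨) [IsMarkovKernel M]
    {ρ : ℝ} (hρ : 0 < ρ) (hM : IsZCDP M ρ) (x y : Fin n → 𝓧) : M x ≪ M y := by
  have key : ∀ d : ℕ, ∀ y, hammingDist x y = d → M x ≪ M y := by
    intro d
    induction d with
    | zero => intro y h; rw [hammingDist_eq_zero.1 h]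
    | succ d ih =>
      intro y h
      obtain ⟨z, hz, hzy⟩ := hamming_path h
      refine (ih z hz).trans ?_
      exact (renyi_le one_pos hρ (hM z y hzy _ (by norm_num))).1
  exact key _ y rfl

lemma zcdp_bkl [DecidableEq 𝓧] {n : ℕ} (M : Kernel (Fin n → 𝓧) 𝓨) [IsMarkovKernel M]
    {ρ : ℝ} (hρ : 0 < ρ) (hM : IsZCDP M ρ) {S : Set 𝓨} (hS : MeasurableSet S)
    (h0 : ∀ x, 0 < (M x).real S) (h1 : ∀ x, (M x).real S < 1) (x y : Fin n → 𝓧) :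
    bkl ((M x).real S) ((M y).real S) ≤ ρ * (hammingDist x y : ℝ) ^ 2 := by
  have key : ∀ d : ℕ, ∀ y, hammingDist x y = d →
      bkl ((M x).real S) ((M y).real S) ≤ ρ * (d : ℝ) ^ 2 := by
    intro d
    induction d with
    | zero => intro y h; rw [hammingDist_eq_zero.1 h, bkl_self]; simp
    | succ d ih =>
      intro y h
      obtain ⟨z, hz, hzy⟩ := hamming_path h
      refine bkl_group d hρ (h0 x) (h1 x) (h0 z) (h1 z) (h0 y) (h1 y) ?_ (ih z hz) ?_
      · intro s hs
        exact renyi_binary hs hρ (hM z y hzy _ (by linarith)) hS (h0 z) (h1 z) (h0 y) (h1 y)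
      · intro hd
        subst hd
        rw [hammingDist_eq_zero.1 hz]
  exact key _ y rfl

lemma pointwise_fano [DecidableEq 𝓧] {n N : ℕ} (hN : 2 ≤ N) (M : Kernel (Fin n → 𝓧) 𝓨)
    [IsMarkovKernel M] {ρ : ℝ} (hρ : 0 < ρ) (hM : IsZCDP M ρ) {S : Set 𝓨} (hS : MeasurableSet S)
    (x y : Fin n → 𝓧) :
    (M x).real S * Real.log N - ((N : ℝ) - 1) * (M y).real S
      ≤ ρ * (hammingDist x y : ℝ) ^ 2 := by
  have hN' : (2 : ℝ) ≤ N := by exact_mod_cast hN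
  have hac := zcdp_ac M hρ hM
  have hzero : ∀ (T : Set 𝓨) x y, (M x).real T = 0 → (M y).real T = 0 := by
    intro T x y h
    rw [measureReal_eq_zero_iff] at h ⊢
    exact hac y x h
  have hnn : 0 ≤ ρ * (hammingDist x y : ℝ) ^ 2 := by positivity
  by_cases h0 : (M x).real S = 0
  · rw [h0, hzero S x y h0]; simpa using hnn
  by_cases h1 : (M x).real Sᶜ = 0
  · have h2 := hzero _ x y h1
    rw [probReal_compl_eq_one_sub hS] at h1 h2
    have e1 : (M x).real S = 1 := by linarith
    have e2 : (M y).real S = 1 := by linarith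
    rw [e1, e2]
    have := Real.log_le_sub_one_of_pos (show (0 : ℝ) < N by linarith)
    linarith
  have H0 : ∀ z, 0 < (M z).real S := fun z =>
    lt_of_le_of_ne measureReal_nonneg fun h => h0 (hzero S z x h.symm)
  have H1 : ∀ z, (M z).real S < 1 := fun z => by
    have : 0 < (M z).real Sᶜ :=
      lt_of_le_of_ne measureReal_nonneg fun h => h1 (hzero _ z x h.symm)
    rw [probReal_compl_eq_one_sub hS] at this
    linarith
  have h2 := zcdp_bkl M hρ hM hS H0 H1 x y
  have h3 := bkl_dv (H0 x) (H1 x) (H0 y) (H1 y) (Real.log N) 0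
  rw [Real.exp_log (by linarith), Real.exp_zero] at h3
  have hy0 := H0 y
  have hy1 := H1 y
  have h4 := Real.log_le_sub_one_of_pos
    (show 0 < (M y).real S * N + (1 - (M y).real S) * 1 by nlinarith)
  nlinarith

lemma tv_bdd {α : Type*} [MeasurableSpace α] (p q : Measure α) [IsProbabilityMeasure p]
    [IsProbabilityMeasure q] : BddAbove (Set.range fun S : {S : Set α // MeasurableSet S} =>
      ((p S.1).toReal - (q S.1).toReal)) := by
  refine ⟨1, ?_⟩
  rintro _ ⟨S, rfl⟩
  have h1 : p.real S.1 ≤ 1 := measureReal_le_one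
  have h2 : 0 ≤ q.real S.1 := measureReal_nonneg
  simp only [Measure.real] at h1 h2
  simp only
  linarith

lemma tv_le_one {α : Type*} [MeasurableSpace α] (p q : Measure α) [IsProbabilityMeasure p]
    [IsProbabilityMeasure q] : tvDist p q ≤ 1 := by
  have : Nonempty {S : Set α // MeasurableSet S} := ⟨⟨∅, MeasurableSet.empty⟩⟩
  refine ciSup_le fun S => ?_
  have h1 : p.real S.1 ≤ 1 := measureReal_le_one
  have h2 : 0 ≤ q.real S.1 := measureReal_nonneg
  simp only [Measure.real] at h1 h2
  linarith

lemma le_tv {α : Type*} [MeasurableSpace α] (p q : Measure α) [IsProbabilityMeasure p]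
    [IsProbabilityMeasure q] {S : Set α} (hS : MeasurableSet S) :
    p.real S - q.real S ≤ tvDist p q :=
  le_ciSup (tv_bdd p q) ⟨S, hS⟩

lemma tv_nonneg {α : Type*} [MeasurableSpace α] (p q : Measure α) [IsProbabilityMeasure p]
    [IsProbabilityMeasure q] : 0 ≤ tvDist p q := by
  simpa using le_tv p q MeasurableSet.empty

/-- second marginal of the coupling space -/
def cY {α : Type*} (w : α × α × Bool) : α := if w.2.2 = true then w.2.1 else w.1

/-- the coin of the coupling space -/
noncomputable def cB {α : Type*} (w : α × α × Bool) : ℝ := if w.2.2 = true then 1 else 0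

lemma measurableSet_coin {α : Type*} [MeasurableSpace α] :
    MeasurableSet {w : α × α × Bool | w.2.2 = true} :=
  (measurable_snd.comp measurable_snd) (measurableSet_singleton true)

lemma measurable_cY {α : Type*} [MeasurableSpace α] : Measurable (cY (α := α)) :=
  Measurable.ite measurableSet_coin (by fun_prop) (by fun_prop)

lemma measurable_cB {α : Type*} [MeasurableSpace α] : Measurable (cB (α := α)) :=
  Measurable.ite measurableSet_coin (by fun_prop) (by fun_prop)

lemma exists_coupling {α : Type*} [MeasurableSpace α] (p q : Measure α) [IsProbabilityMeasure p]
    [IsProbabilityMeasure q] : ∃ μ : Measure (α × α × Bool), IsProbabilityMeasure μ ∧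
      μ.map Prod.fst = p ∧ μ.map cY = q ∧ ∫ w, cB w ∂μ ≤ tvDist p q := by
  obtain ⟨S, hS, hS1, hS2⟩ := hahn_decomposition p q
  set C : Measure α := q.restrict S + p.restrict Sᶜ with hC
  have hCp : C ≤ p := by
    refine Measure.le_iff.2 fun T hT => ?_
    rw [hC, Measure.add_apply, Measure.restrict_apply hT, Measure.restrict_apply hT,
      ← measure_inter_add_sdiff T hS, Set.sdiff_eq]
    exact add_le_add (hS1 _ (hT.inter hS) Set.inter_subset_right) le_rfl
  have hCq : C ≤ q := by
    refine Measure.le_iff.2 fun T hT => ?_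
    rw [hC, Measure.add_apply, Measure.restrict_apply hT, Measure.restrict_apply hT,
      ← measure_inter_add_sdiff T hS, Set.sdiff_eq]
    exact add_le_add le_rfl (hS2 _ (hT.inter hS.compl) Set.inter_subset_right)
  have : IsFiniteMeasure C := by rw [hC]; infer_instance
  set A := p - C with hA
  set B := q - C with hB
  have hAC : A + C = p := Measure.sub_add_cancel_of_le hCp
  have hBC : B + C = q := Measure.sub_add_cancel_of_le hCq
  set t : ℝ≥0∞ := A Set.univ with ht
  have htB : B Set.univ = t := by
    rw [ht, hA, hB, Measure.sub_apply MeasurableSet.univ hCp, Measure.sub_apply MeasurableSet.univ hCq,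
      measure_univ (μ := p), measure_univ (μ := q)]
  have : IsFiniteMeasure A := ⟨lt_of_le_of_lt (Measure.sub_le _) (measure_lt_top p _)⟩
  have : IsFiniteMeasure B := ⟨lt_of_le_of_lt (Measure.sub_le _) (measure_lt_top q _)⟩
  have htt : t ≠ ⊤ := measure_ne_top A _
  have hsm : ∀ D : Measure α, D Set.univ = t → t⁻¹ • (t • D) = D := by
    intro D hD
    by_cases h0 : t = 0
    · have : D = 0 := Measure.measure_univ_eq_zero.1 (hD.trans h0)
      simp [this]
    · rw [smul_smul, ENNReal.inv_mul_cancel h0 htt, one_smul]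
  have m1 : Measurable (fun x : α => (x, x, false)) := by fun_prop
  have m2 : Measurable (fun z : α × α => (z.1, z.2, true)) := by fun_prop
  set μ : Measure (α × α × Bool) := C.map (fun x => (x, x, false)) +
    t⁻¹ • (A.prod B).map (fun z => (z.1, z.2, true)) with hμ
  have hfst : μ.map Prod.fst = p := by
    rw [hμ, Measure.map_add _ _ measurable_fst, Measure.map_smul,
      Measure.map_map measurable_fst m1, Measure.map_map measurable_fst m2]
    have e1 : (Prod.fst ∘ fun x : α => (x, x, false)) = id := rfl
    have e2 : (Prod.fst ∘ fun z : α × α => (z.1, z.2, true)) = Prod.fst := rfl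
    rw [e1, e2, Measure.map_id, Measure.map_fst_prod, htB, hsm A rfl, add_comm, hAC]
  have hsnd : μ.map cY = q := by
    rw [hμ, Measure.map_add _ _ measurable_cY, Measure.map_smul,
      Measure.map_map measurable_cY m1, Measure.map_map measurable_cY m2]
    have e1 : (cY ∘ fun x : α => (x, x, false)) = id := by ext; simp [cY]
    have e2 : (cY ∘ fun z : α × α => (z.1, z.2, true)) = Prod.snd := by ext; simp [cY]
    rw [e1, e2, Measure.map_id, Measure.map_snd_prod, ← ht, hsm B htB, add_comm, hBC]
  have hprob : IsProbabilityMeasure μ := by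
    constructor
    rw [← Set.preimage_univ (f := Prod.fst), ← Measure.map_apply measurable_fst MeasurableSet.univ,
      hfst, measure_univ]
  refine ⟨μ, hprob, hfst, hsnd, ?_⟩
  have hb : (cB : α × α × Bool → ℝ) = Set.indicator {w | w.2.2 = true} 1 := by
    ext w; simp [cB, Set.indicator]
  rw [hb, integral_indicator_one measurableSet_coin]
  have hval : μ {w | w.2.2 = true} = t := by
    rw [hμ, Measure.add_apply, Measure.smul_apply, Measure.map_apply m1 measurableSet_coin,
      Measure.map_apply m2 measurableSet_coin]
    simp only [Set.preimage_ofPred_eq, Bool.false_eq_true, Set.ofPred_false, measure_empty,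
      Set.ofPred_true, zero_add, smul_eq_mul]
    rw [← Set.univ_prod_univ, Measure.prod_prod, htB, ← ht]
    by_cases h0 : t = 0
    · simp [h0]
    · rw [← mul_assoc, ENNReal.inv_mul_cancel h0 htt, one_mul]
  have hCu : C.real Set.univ = q.real S + (1 - p.real S) := by
    rw [← probReal_compl_eq_one_sub hS, hC, measureReal_add_apply]
    simp [Measure.real]
  have hAu : A.real Set.univ + C.real Set.univ = 1 := by
    rw [← measureReal_add_apply, hAC]; simp
  have : μ.real {w | w.2.2 = true} = A.real Set.univ := by
    rw [Measure.real, hval, Measure.real]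
  rw [this]
  have := le_tv p q hS
  linarith

lemma integrable_cB {α : Type*} [MeasurableSpace α] (μ : Measure (α × α × Bool))
    [IsFiniteMeasure μ] : Integrable cB μ := by
  refine Integrable.of_bound measurable_cB.aestronglyMeasurable 1 (ae_of_all _ fun w => ?_)
  unfold cB
  split_ifs <;> simp

lemma couple_general {α : Type*} [MeasurableSpace α] (p q : Measure α) [IsProbabilityMeasure p]
    [IsProbabilityMeasure q] {g h : α → ℝ} (hgm : Measurable g) (hhm : Measurable h)
    (hg : Integrable g p) (hh : Integrable h q) {C : ℝ} (hC : 0 ≤ C)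
    (h1 : ∀ x y, g x - h y ≤ C) (h2 : ∀ x, g x ≤ h x) :
    ∫ x, g x ∂p - ∫ y, h y ∂q ≤ C * tvDist p q := by
  obtain ⟨μ, hμ, rfl, rfl, hb⟩ := exists_coupling p q
  rw [integral_map measurable_fst.aemeasurable hgm.aestronglyMeasurable,
    integral_map measurable_cY.aemeasurable hhm.aestronglyMeasurable]
  have hg' : Integrable (fun w : α × α × Bool => g w.1) μ := hg.comp_measurable measurable_fst
  have hh' : Integrable (fun w => h (cY w)) μ := hh.comp_measurable measurable_cY
  rw [← integral_sub hg' hh']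
  refine le_trans ?_ (mul_le_mul_of_nonneg_left hb hC)
  rw [← integral_const_mul]
  refine integral_mono (hg'.sub hh') ((integrable_cB μ).const_mul C) fun w => ?_
  simp only [cB, cY]
  split_ifs with hw
  · simpa using h1 _ _
  · simpa using h2 _

lemma couple_pi {α : Type*} [MeasurableSpace α] [DecidableEq α] {n : ℕ} (p q : Measure α)
    [IsProbabilityMeasure p]
    [IsProbabilityMeasure q] {g h : (Fin n → α) → ℝ} (hgm : Measurable g) (hhm : Measurable h)
    (hg : Integrable g (Measure.pi fun _ => p)) (hh : Integrable h (Measure.pi fun _ => q))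
    {ρ : ℝ} (hρ : 0 ≤ ρ)
    (h1 : ∀ x y, g x - h y ≤ ρ * (hammingDist x y : ℝ) ^ 2) :
    ∫ x, g x ∂(Measure.pi fun _ => p) - ∫ y, h y ∂(Measure.pi fun _ => q)
      ≤ ρ * (n * tvDist p q + n ^ 2 * tvDist p q ^ 2) := by
  obtain ⟨μ, hμ, hp, hq, hb⟩ := exists_coupling p q
  have : ∀ i : Fin n, SigmaFinite (μ.map (Prod.fst : α × α × Bool → α)) := fun _ => by
    rw [hp]; infer_instance
  have : ∀ i : Fin n, SigmaFinite (μ.map (cY : α × α × Bool → α)) := fun _ => by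
    rw [hq]; infer_instance
  have hpp : (Measure.pi fun _ : Fin n => μ).map (fun w i => (w i).1)
      = Measure.pi fun _ : Fin n => p := by
    rw [Measure.pi_map_pi (f := fun _ : Fin n => (Prod.fst : α × α × Bool → α))
      (fun i => measurable_fst.aemeasurable), hp]
  have hqq : (Measure.pi fun _ : Fin n => μ).map (fun w i => cY (w i))
      = Measure.pi fun _ : Fin n => q := by
    rw [Measure.pi_map_pi (f := fun _ : Fin n => (cY : α × α × Bool → α))
      (fun i => measurable_cY.aemeasurable), hq]
  have mX : Measurable (fun (w : Fin n → α × α × Bool) i => (w i).1) := by fun_prop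
  have mY : Measurable (fun (w : Fin n → α × α × Bool) i => cY (w i)) :=
    measurable_pi_lambda _ fun i => measurable_cY.comp (measurable_pi_apply i)
  rw [← hpp] at hg ⊢
  rw [← hqq] at hh ⊢
  rw [integral_map mX.aemeasurable hgm.aestronglyMeasurable,
    integral_map mY.aemeasurable hhm.aestronglyMeasurable]
  have hg' : Integrable (fun w : Fin n → α × α × Bool => g (fun i => (w i).1))
      (Measure.pi fun _ : Fin n => μ) := hg.comp_measurable mX
  have hh' : Integrable (fun w : Fin n → α × α × Bool => h (fun i => cY (w i)))
      (Measure.pi fun _ : Fin n => μ) := hh.comp_measurable mY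
  rw [← integral_sub hg' hh']
  set t := ∫ w, cB w ∂μ with ht
  have ht0 : 0 ≤ t := integral_nonneg fun w => by
    simp only [cB, Pi.zero_apply]; split_ifs <;> simp
  have hmB : ∀ i : Fin n, Measurable fun w : Fin n → α × α × Bool => cB (w i) := fun i =>
    measurable_cB.comp (measurable_pi_apply i)
  have hcB01 : ∀ w : α × α × Bool, cB w = 0 ∨ cB w = 1 := fun w => by
    simp only [cB]; split_ifs <;> simp
  have hint : ∀ i j : Fin n, Integrable (fun w : Fin n → α × α × Bool => cB (w i) * cB (w j))
      (Measure.pi fun _ : Fin n => μ) := fun i j => by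
    refine Integrable.of_bound ((hmB i).mul (hmB j)).aestronglyMeasurable 1
      (ae_of_all _ fun w => ?_)
    rcases hcB01 (w i) with h | h <;> rcases hcB01 (w j) with h' | h' <;> simp [h, h']
  have hsq : ∀ w : Fin n → α × α × Bool,
      (∑ i, cB (w i)) ^ 2 = ∑ i, ∑ j, cB (w i) * cB (w j) := fun w => by
    rw [sq, Finset.sum_mul_sum]
  have hE1 : ∀ i : Fin n, ∫ w, cB (w i) ∂(Measure.pi fun _ : Fin n => μ) = t := fun i => by
    have hm := measurePreserving_eval (fun _ : Fin n => μ) i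
    rw [ht]
    conv_rhs => rw [← hm.map_eq]
    rw [integral_map hm.measurable.aemeasurable measurable_cB.aestronglyMeasurable]
  have hE : ∀ i j : Fin n, ∫ w, cB (w i) * cB (w j) ∂(Measure.pi fun _ : Fin n => μ)
      ≤ (if i = j then t else 0) + t ^ 2 := fun i j => by
    by_cases hij : i = j
    · subst hij
      have : (fun w : Fin n → α × α × Bool => cB (w i) * cB (w i)) = fun w => cB (w i) := by
        ext w
        rcases hcB01 (w i) with h | h <;> simp [h]
      rw [this, hE1]
      simp only [if_true]
      nlinarith
    · have hind := (iIndepFun_pi (μ := fun _ : Fin n => μ) (X := fun _ => cB)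
        (fun _ => measurable_cB.aemeasurable)).indepFun hij
      have := hind.integral_mul_eq_mul_integral (hmB i).aestronglyMeasurable
        (hmB j).aestronglyMeasurable
      simp only [Pi.mul_def] at this
      rw [this, hE1, hE1]
      simp [hij, sq]
  have hfin : ∫ w, (∑ i, cB (w i)) ^ 2 ∂(Measure.pi fun _ : Fin n => μ)
      ≤ n * t + n ^ 2 * t ^ 2 := by
    simp_rw [hsq]
    rw [integral_finsetSum _ fun i _ => integrable_finsetSum _ fun j _ => hint i j]
    simp_rw [integral_finsetSum _ fun j _ => hint _ j]
    refine le_trans (Finset.sum_le_sum fun i _ => Finset.sum_le_sum fun j _ => hE i j) ?_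
    simp [Finset.sum_add_distrib]
    apply le_of_eq; ring
  have hsqint : Integrable (fun w : Fin n → α × α × Bool => (∑ i, cB (w i)) ^ 2)
      (Measure.pi fun _ : Fin n => μ) := by
    simp_rw [hsq]
    exact integrable_finsetSum _ fun i _ => integrable_finsetSum _ fun j _ => hint i j
  calc _ ≤ ∫ w, ρ * (∑ i, cB (w i)) ^ 2 ∂(Measure.pi fun _ : Fin n => μ) := by
        refine integral_mono (hg'.sub hh') (hsqint.const_mul ρ) fun w => ?_
        refine (h1 _ _).trans ?_
        have hd : (hammingDist (fun i => (w i).1) (fun i => cY (w i)) : ℝ) ≤ ∑ i, cB (w i) := by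
          unfold hammingDist
          rw [Finset.card_filter]
          push_cast
          refine Finset.sum_le_sum fun i _ => ?_
          simp only [cY, cB]
          split_ifs <;> simp_all
        gcongr
    _ = ρ * ∫ w, (∑ i, cB (w i)) ^ 2 ∂(Measure.pi fun _ : Fin n => μ) := integral_const_mul _ _
    _ ≤ ρ * (n * t + n ^ 2 * t ^ 2) := by gcongr
    _ ≤ _ := by gcongr

section Main

variable {n N : ℕ} (M : Kernel (Fin n → 𝓧) 𝓨) [IsMarkovKernel M] (Ψ : 𝓨 → Fin N)

lemma meas_cell {Ψ : 𝓨 → Fin N} (hΨ : Measurable Ψ) (i : Fin N) : MeasurableSet {y | Ψ y = i} :=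
  hΨ (measurableSet_singleton i)

lemma measurable_real (S : Set 𝓨) (hS : MeasurableSet S) :
    Measurable fun x => (M x).real S :=
  (Kernel.measurable_coe M hS).ennreal_toReal

lemma integrable_real (S : Set 𝓨) (hS : MeasurableSet S) (P : Measure (Fin n → 𝓧))
    [IsProbabilityMeasure P] : Integrable (fun x => (M x).real S) P := by
  refine Integrable.of_bound (measurable_real M S hS).aestronglyMeasurable 1
    (ae_of_all _ fun x => ?_)
  rw [Real.norm_of_nonneg measureReal_nonneg]
  exact measureReal_le_one

lemma err_eq {Ψ : 𝓨 → Fin N} (hΨ : Measurable Ψ) (i : Fin N) (P : Measure (Fin n → 𝓧))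
    [IsProbabilityMeasure P] :
    (∫⁻ x, M x {y | Ψ y ≠ i} ∂P).toReal = 1 - ∫ x, (M x).real {y | Ψ y = i} ∂P := by
  have hS := meas_cell hΨ i
  have hc : {y | Ψ y ≠ i} = {y | Ψ y = i}ᶜ := rfl
  rw [← integral_toReal]
  · have : ∀ x, (M x {y | Ψ y ≠ i}).toReal = 1 - (M x).real {y | Ψ y = i} := fun x => by
      rw [← probReal_compl_eq_one_sub hS]; rfl
    simp_rw [this]
    rw [integral_sub (integrable_const _) (integrable_real M _ hS P)]
    simp
  · rw [hc]; exact (Kernel.measurable_coe M hS.compl).aemeasurable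
  · exact ae_of_all _ fun x => measure_lt_top _ _

lemma sum_cells {Ψ : 𝓨 → Fin N} (hΨ : Measurable Ψ) (P : Measure (Fin n → 𝓧))
    [IsProbabilityMeasure P] :
    ∑ i, ∫ x, (M x).real {y | Ψ y = i} ∂P = 1 := by
  rw [← integral_finsetSum _ fun i _ => integrable_real M _ (meas_cell hΨ i) P]
  have : ∀ x, ∑ i, (M x).real {y | Ψ y = i} = 1 := fun x => by
    have h := sum_measureReal_preimage_singleton (μ := M x) (f := Ψ) Finset.univ
      (fun i _ => meas_cell hΨ i)
    rw [Finset.coe_univ, Set.preimage_univ, probReal_univ] at h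
    exact h
  simp [this]

lemma one_sub_sup_le {Ψ : 𝓨 → Fin N} (hΨ : Measurable Ψ) (P : Fin N → Measure (Fin n → 𝓧))
    (hP : ∀ i, IsProbabilityMeasure (P i)) (i : Fin N) :
    1 - (⨆ i : Fin N, (∫⁻ x, M x {y | Ψ y ≠ i} ∂(P i)).toReal)
      ≤ ∫ x, (M x).real {y | Ψ y = i} ∂(P i) := by
  have h := le_ciSup (f := fun i : Fin N => (∫⁻ x, M x {y | Ψ y ≠ i} ∂(P i)).toReal)
    (Set.finite_range _).bddAbove i
  have h2 := err_eq M hΨ i (P i)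
  linarith

lemma fano_sum (hN : 2 ≤ N) {Ψ : 𝓨 → Fin N} (hΨ : Measurable Ψ)
    (P : Fin N → Measure (Fin n → 𝓧))
    (hP : ∀ i, IsProbabilityMeasure (P i)) (K : Fin N → Fin N → ℝ)
    (hK : ∀ i j, (∫ x, (M x).real {y | Ψ y = i} ∂(P i)) * Real.log N
      - ((N : ℝ) - 1) * (∫ x, (M x).real {y | Ψ y = i} ∂(P j)) ≤ K i j) :
    1 - (1 + ((N : ℝ) ^ 2)⁻¹ * ∑ i, ∑ j, K i j) / Real.log N ≤
      ⨆ i : Fin N, (∫⁻ x, M x {y | Ψ y ≠ i} ∂(P i)).toReal := by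
  have hN' : (2 : ℝ) ≤ N := by exact_mod_cast hN
  have hlog : 0 < Real.log N := Real.log_pos (by linarith)
  set E := ⨆ i : Fin N, (∫⁻ x, M x {y | Ψ y ≠ i} ∂(P i)).toReal with hE
  have hs := one_sub_sup_le M hΨ P hP
  rw [← hE] at hs
  have h1 : ∑ i : Fin N, ∑ j : Fin N, ((1 - E) * Real.log N
      - ((N : ℝ) - 1) * (∫ x, (M x).real {y | Ψ y = i} ∂(P j))) ≤ ∑ i, ∑ j, K i j := by
    refine Finset.sum_le_sum fun i _ => Finset.sum_le_sum fun j _ => le_trans ?_ (hK i j)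
    gcongr
    exact hs i
  have h2 : ∑ i : Fin N, ∑ j : Fin N, ((1 - E) * Real.log N
      - ((N : ℝ) - 1) * (∫ x, (M x).real {y | Ψ y = i} ∂(P j)))
      = (N : ℝ) ^ 2 * ((1 - E) * Real.log N) - ((N : ℝ) - 1) * N := by
    rw [Finset.sum_comm]
    simp_rw [Finset.sum_sub_distrib, ← Finset.mul_sum]
    simp_rw [sum_cells M hΨ]
    simp
    ring
  rw [h2] at h1
  rw [sub_le_comm, le_div_iff₀ hlog]
  have h3 : (1 - E) * Real.log N - 1 ≤ ((N : ℝ) ^ 2)⁻¹ * ∑ i, ∑ j, K i j := by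
    rw [le_inv_mul_iff₀ (by positivity)]
    nlinarith
  linarith

end Main

lemma ratio_ge {t : ℝ} (h0 : 0 ≤ t) (h1 : t ≤ 1) : t ≤ 2 * t / (1 + t) := by
  rw [le_div_iff₀ (by linarith)]
  nlinarith

/-- **Fano-type bound for `ρ`-zCDP**: if `M` is `ρ`-zCDP, then for any test `Ψ` with `N`
outcomes, any probability distributions `P 1, …, P N` on `𝓧^n` and any probability
distribution `Q` with `P i ≪ Q` for all `i`, the maximal error
`max_i P_{X ∼ P i, M}(Ψ(M(X)) ≠ i)` satisfies the two lower bounds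
`1 - (1 + (1/N) ∑ i KL(P i ‖ Q)) / ln N` (stated equivalently as
`(1 - max) ln N ≤ 1 + (1/N) ∑ i KL(P i ‖ Q)` in `ℝ≥0∞` to accommodate infinite KL) and
`1 - (1 + (n²ρ/N²) ∑_{i,j} 2 TV(P i, P j)/(1 + TV(P i, P j))) / ln N`; moreover, when
`P i = (p i)^{⊗n}` are product distributions, it satisfies
`1 - (1 + (n²ρ/N²) ∑_{i,j} ((1/n) r i j + (r i j)²)) / ln N` where
`r i j = 2 TV(p i, p j)/(1 + TV(p i, p j))`. -/
theorem fano_zcdp [DecidableEq 𝓧] {n N : ℕ} (hN : 2 ≤ N)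
    (M : Kernel (Fin n → 𝓧) 𝓨) [IsMarkovKernel M]
    (ρ : ℝ) (hρ : 0 < ρ) (hzCDP : IsZCDP M ρ)
    (Ψ : 𝓨 → Fin N) (hΨ : Measurable Ψ) :
    (∀ P : Fin N → Measure (Fin n → 𝓧), (∀ i, IsProbabilityMeasure (P i)) →
      (∀ Q : Measure (Fin n → 𝓧), IsProbabilityMeasure Q → (∀ i, P i ≪ Q) →
        ENNReal.ofReal
            ((1 - ⨆ i : Fin N, (∫⁻ x, M x {y | Ψ y ≠ i} ∂(P i)).toReal) * Real.log N)
          ≤ 1 + (N : ℝ≥0∞)⁻¹ * ∑ i : Fin N, klDiv' (P i) Q) ∧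
      (1 - (1 + (n : ℝ) ^ 2 * ρ / (N : ℝ) ^ 2 *
            ∑ i : Fin N, ∑ j : Fin N,
              2 * tvDist (P i) (P j) / (1 + tvDist (P i) (P j))) / Real.log N
        ≤ ⨆ i : Fin N, (∫⁻ x, M x {y | Ψ y ≠ i} ∂(P i)).toReal)) ∧
    (∀ p : Fin N → Measure 𝓧, (∀ i, IsProbabilityMeasure (p i)) →
      1 - (1 + (n : ℝ) ^ 2 * ρ / (N : ℝ) ^ 2 *
            ∑ i : Fin N, ∑ j : Fin N,
              ((n : ℝ)⁻¹ * (2 * tvDist (p i) (p j) / (1 + tvDist (p i) (p j)))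
                + (2 * tvDist (p i) (p j) / (1 + tvDist (p i) (p j))) ^ 2)) / Real.log N
        ≤ ⨆ i : Fin N,
            (∫⁻ x, M x {y | Ψ y ≠ i} ∂(Measure.pi fun _ : Fin n => p i)).toReal) := by
  have hN' : (2 : ℝ) ≤ N := by exact_mod_cast hN
  have hlog : 0 < Real.log N := Real.log_pos (by linarith)
  have hpt := fun (i : Fin N) => pointwise_fano hN M hρ hzCDP (meas_cell hΨ i)
  have hmg : ∀ i : Fin N, Measurable fun x => (M x).real {y | Ψ y = i} * Real.log N := fun i =>
    (measurable_real M _ (meas_cell hΨ i)).mul_const _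
  have hmh : ∀ i : Fin N, Measurable fun x => ((N : ℝ) - 1) * (M x).real {y | Ψ y = i} := fun i =>
    (measurable_real M _ (meas_cell hΨ i)).const_mul _
  have hig : ∀ (i : Fin N) (P : Measure (Fin n → 𝓧)) [IsProbabilityMeasure P],
      Integrable (fun x => (M x).real {y | Ψ y = i} * Real.log N) P := fun i P _ =>
    (integrable_real M _ (meas_cell hΨ i) P).mul_const _
  have hih : ∀ (i : Fin N) (P : Measure (Fin n → 𝓧)) [IsProbabilityMeasure P],
      Integrable (fun x => ((N : ℝ) - 1) * (M x).real {y | Ψ y = i}) P := fun i P _ =>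
    (integrable_real M _ (meas_cell hΨ i) P).const_mul _
  refine ⟨fun P hP => ⟨fun Q hQ hPQ => ?_, ?_⟩, fun p hp => ?_⟩
  · by_cases hfin : ∀ i, Integrable (llr (P i) Q) (P i)
    swap
    · push Not at hfin
      obtain ⟨i, hi⟩ := hfin
      have htop : ∑ i : Fin N, klDiv' (P i) Q = ⊤ := by
        rw [ENNReal.sum_eq_top]
        exact ⟨i, Finset.mem_univ i, by simp [klDiv', hi]⟩
      rw [htop, ENNReal.mul_top (by simp)]
      simp
    have hkl : ∀ i, klDiv' (P i) Q = ENNReal.ofReal (∫ x, llr (P i) Q x ∂(P i)) := fun i => by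
      simp [klDiv', hPQ i, hfin i]
    set E := ⨆ i : Fin N, (∫⁻ x, M x {y | Ψ y ≠ i} ∂(P i)).toReal with hE
    have hs := one_sub_sup_le M hΨ P hP
    rw [← hE] at hs
    have hi : ∀ i, (1 - E) * Real.log N ≤ ∫ x, llr (P i) Q x ∂(P i)
        + ((N : ℝ) - 1) * ∫ x, (M x).real {y | Ψ y = i} ∂Q := fun i => by
      have hb : ∀ x, Real.exp ((M x).real {y | Ψ y = i} * Real.log N)
          ≤ 1 + ((N : ℝ) - 1) * (M x).real {y | Ψ y = i} := fun x => by
        have h := rpow_one_add_le_one_add_mul_self (s := (N : ℝ) - 1) (by linarith)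
          (measureReal_nonneg (μ := M x) (s := {y | Ψ y = i})) measureReal_le_one
        rw [add_sub_cancel, Real.rpow_def_of_pos (by linarith)] at h
        rw [mul_comm _ (Real.log N), mul_comm ((N : ℝ) - 1)]
        exact h
      have hei : Integrable (fun x => Real.exp ((M x).real {y | Ψ y = i} * Real.log N)) Q := by
        refine Integrable.mono' ((integrable_const (1 : ℝ)).add (hih i Q))
          (hmg i).exp.aestronglyMeasurable (ae_of_all _ fun x => ?_)
        rw [Real.norm_of_nonneg (Real.exp_pos _).le]
        exact hb x
      have h1 := dv_measure (hPQ i) (hfin i) (hig i (P i)) hei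
      have h2 := integral_mono hei ((integrable_const (1 : ℝ)).add (hih i Q)) hb
      simp only [Pi.add_apply] at h2
      rw [integral_add (integrable_const _) (hih i Q), integral_const_mul] at h2
      simp only [integral_const, probReal_univ, smul_eq_mul, mul_one] at h2
      rw [integral_mul_const] at h1
      have h3 := mul_le_mul_of_nonneg_right (hs i) hlog.le
      linarith
    have hsum := Finset.sum_le_sum fun i (_ : i ∈ Finset.univ) => hi i
    rw [Finset.sum_add_distrib, ← Finset.mul_sum _ _ ((N : ℝ) - 1), sum_cells M hΨ] at hsum
    simp only [Finset.sum_const, Finset.card_univ, Fintype.card_fin, nsmul_eq_mul, mul_one] at hsum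
    have hle : (1 - E) * Real.log N
        ≤ 1 + (N : ℝ)⁻¹ * ∑ i, max (∫ x, llr (P i) Q x ∂(P i)) 0 := by
      have h1 : ∑ i, (∫ x, llr (P i) Q x ∂(P i)) ≤ ∑ i, max (∫ x, llr (P i) Q x ∂(P i)) 0 :=
        Finset.sum_le_sum fun i _ => le_max_left _ _
      rw [← sub_le_iff_le_add', le_inv_mul_iff₀ (by linarith)]
      linarith
    refine (ENNReal.ofReal_le_ofReal hle).trans ?_
    have hnn : 0 ≤ ∑ i, max (∫ x, llr (P i) Q x ∂(P i)) 0 :=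
      Finset.sum_nonneg fun i _ => le_max_right _ _
    rw [ENNReal.ofReal_add zero_le_one (by positivity), ENNReal.ofReal_one,
      ENNReal.ofReal_mul (by positivity), ENNReal.ofReal_inv_of_pos (by linarith),
      ENNReal.ofReal_natCast, ENNReal.ofReal_sum_of_nonneg fun i _ => le_max_right _ _]
    simp_rw [hkl]
    simp [ENNReal.ofReal_max]
  · have hmain := fano_sum M hN hΨ P hP
      (fun i j => ρ * (n : ℝ) ^ 2 * (2 * tvDist (P i) (P j) / (1 + tvDist (P i) (P j)))) ?_
    · convert hmain using 3
      simp_rw [← Finset.mul_sum]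
      ring
    · intro i j
      have h := couple_general (P i) (P j) (hmg i) (hmh i) (hig i _) (hih i _)
        (C := ρ * (n : ℝ) ^ 2) (by positivity) ?_ ?_
      · rw [integral_mul_const, integral_const_mul] at h
        refine h.trans ?_
        gcongr
        exact ratio_ge (tv_nonneg _ _) (tv_le_one _ _)
      · intro x y
        refine (hpt i x y).trans ?_
        have : hammingDist x y ≤ n := by simpa using hammingDist_le_card_fintype (x := x) (y := y)
        gcongr
      · intro x
        have := hpt i x x
        simp only [hammingDist_self] at this
        norm_num at this
        linarith
  · have hmain := fano_sum M hN hΨ (fun i => Measure.pi fun _ : Fin n => p i)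
      (fun i => inferInstance)
      (fun i j => ρ * (n : ℝ) ^ 2 * ((n : ℝ)⁻¹ * (2 * tvDist (p i) (p j) / (1 + tvDist (p i) (p j)))
                + (2 * tvDist (p i) (p j) / (1 + tvDist (p i) (p j))) ^ 2)) ?_
    · convert hmain using 3
      simp_rw [← Finset.mul_sum]
      ring
    · intro i j
      have h := couple_pi (p i) (p j) (hmg i) (hmh i) (hig i _) (hih i _) hρ.le (hpt i)
      rw [integral_mul_const, integral_const_mul] at h
      refine h.trans ?_
      have h0 := tv_nonneg (p i) (p j)
      have hr := ratio_ge h0 (tv_le_one (p i) (p j))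
      set r := 2 * tvDist (p i) (p j) / (1 + tvDist (p i) (p j))
      have e : ρ * (n : ℝ) ^ 2 * ((n : ℝ)⁻¹ * r + r ^ 2) = ρ * (n * r + n ^ 2 * r ^ 2) := by
        rcases Nat.eq_zero_or_pos n with h | h
        · subst h; simp
        · have : (n : ℝ) ≠ 0 := by positivity
          field_simp
      rw [e]
      gcongr
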